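/- In S_n, for all permutations π, π' with the same left peak set lPe(π) = lPe(π'), and all subsets A, B ⊆ [1,n-1], the number of pairs (σ,τ) with στ = π, lPe(τ) = A, lPe(σ) = B equals the corresponding count for π'. Consequently the span of the sums w_I := Σ_{lPe(π)=I} π is a subalgebra of ℤ[S_n] of dimension f_n (Fibonacci). -/

import Mathlib

/-- A permutation of `{1,…,n}`, modeled as a permutation of `ℕ` fixing `0` and all `i > n`. -/
def IsSn (n : ℕ) (π : Equiv.Perm ℕ) : Prop := ∀ i : ℕ, i = 0 ∨ n < i → π i = i

/-- The left peak set `lPe(π) = {i ∈ [1,n-1] : π(i-1) < π(i) > π(i+1)}`, with `π(0) = 0`. -/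
def leftPeaks (n : ℕ) (π : Equiv.Perm ℕ) : Finset ℕ :=
  (Finset.Icc 1 (n - 1)).filter fun i => π (i - 1) < π i ∧ π (i + 1) < π i

/-- `w_I = Σ_{π ∈ S_n, lPe(π) = I} π` in the group algebra `ℤ[S_n]`. -/
noncomputable def wI (n : ℕ) (I : Finset ℕ) : MonoidAlgebra ℤ (Equiv.Perm ℕ) :=
  ∑ᶠ π ∈ {π : Equiv.Perm ℕ | IsSn n π ∧ leftPeaks n π = I}, MonoidAlgebra.single π (1 : ℤ)

/-- The span of the `w_I`, `I` ranging over left peak sets (sparse subsets of `[1,n-1]`). -/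
noncomputable def leftPeakSpan (n : ℕ) : Submodule ℤ (MonoidAlgebra ℤ (Equiv.Perm ℕ)) :=
  Submodule.span ℤ {v : MonoidAlgebra ℤ (Equiv.Perm ℕ) |
    ∃ I : Finset ℕ, I ⊆ Finset.Icc 1 (n - 1) ∧ (∀ i ∈ I, i + 1 ∉ I) ∧ v = wI n I}

/-! A left enriched word of `π` is a weakly increasing word in the ordered alphabet
`0 < -1 < 1 < -2 < 2 < ⋯` in which a nonnegative letter is repeated only along an ascent of `π` and
a negative letter only along a descent, where position `0` carries the value `0` of `π` and the
letter `0`. The number of left enriched words with given absolute values `β` depends only on `β` and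
the left peak set of `π`: a block of equal absolute values admits no choice of signs if `π` has a
peak strictly inside it, and otherwise one (for the absolute value `0`) or two.

Pairs of letters, read in boustrophedon order, form a single alphabet of the same shape. This
identifies the pairs of left enriched words of `σ` and of `τ`, over all `σ * τ = π`, with left
enriched words of `π`, so that the generating functions of left enriched words with given absolute
values multiply to sums of such generating functions. Over `ℚ` they span all functions of the left
peak set: the words increasing precisely at the positions of a sparse set `A` give a system that is
triangular for the colexicographic order. The dimension is the number of sparse subsets of
`{1, …, n - 1}`. -/

namespace LeftPeak

open Equiv Finset

section Snake

variable {m n a b c c' p p' : ℕ}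

/-- The absolute value of a letter of the alphabet `0 < -1 < 1 < -2 < 2 < ⋯`, which is encoded
order-isomorphically by `ℕ`: the even number `2 * k` stands for `k`, the odd number `2 * k - 1`
for `-k`. -/
def letterAbs (c : ℕ) : ℕ := (c + 1) / 2

lemma letterAbs_mono : Monotone letterAbs := fun _ _ h =>
  Nat.div_le_div_right (Nat.add_le_add_right h 1)

lemma mem_pair_iff_letterAbs_eq : c ∈ ({2 * b - 1, 2 * b} : Finset ℕ) ↔ letterAbs c = b := by
  simp only [mem_insert, mem_singleton, letterAbs]
  omega

/-- The number of column `p` of row `c` in the boustrophedon numbering of a grid with `m` columns: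
the rows are read one after the other, the even ones (nonnegative letters) from left to right and
the odd ones (negative letters) from right to left. -/
def snake (m c p : ℕ) : ℕ := m * c + if Even c then p else m - 1 - p

/-- The column of the cell with number `x` in the boustrophedon numbering; its row is `x / m`. -/
def snakeCol (m x : ℕ) : ℕ := if Even (x / m) then x % m else m - 1 - x % m

lemma snake_div (hp : p < m) : snake m c p / m = c := by
  rw [snake, Nat.mul_add_div (by lia), Nat.div_eq_of_lt (by split_ifs <;> lia), add_zero]

lemma snakeCol_snake (hp : p < m) : snakeCol m (snake m c p) = p := by
  have h : snake m c p % m = if Even c then p else m - 1 - p := by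
    rw [snake, Nat.mul_add_mod, Nat.mod_eq_of_lt (by split_ifs <;> lia)]
  rw [snakeCol, snake_div hp, h]
  split_ifs <;> lia

lemma snake_div_snakeCol (hm : 0 < m) (x : ℕ) : snake m (x / m) (snakeCol m x) = x := by
  have := Nat.mod_lt x hm
  have := Nat.div_add_mod x m
  rw [snake, snakeCol]
  split_ifs <;> lia

lemma snakeCol_lt (hm : 0 < m) (x : ℕ) : snakeCol m x < m := by
  have := Nat.mod_lt x hm
  rw [snakeCol]
  split_ifs <;> lia

lemma snake_lt_snake_iff (hp : p < m) (hp' : p' < m) :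
    snake m c p < snake m c' p' ↔ c < c' ∨ c = c' ∧ if Even c then p < p' else p' < p := by
  rcases lt_trichotomy c c' with h | rfl | h
  · simp only [h, true_or, iff_true]
    exact Nat.lt_of_div_lt_div (by rwa [snake_div hp, snake_div hp'])
  · rw [snake, snake, Nat.add_lt_add_iff_left]
    split_ifs <;> lia
  · simp only [h.not_gt, h.ne', false_and, or_self, iff_false, not_lt]
    exact (Nat.lt_of_div_lt_div (by rwa [snake_div hp, snake_div hp'])).le

lemma eq_of_snake_eq (hp : p < m) (hp' : p' < m) (h : snake m c p = snake m c' p') :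
    p = p' := by
  rw [← snakeCol_snake (c := c) hp, h, snakeCol_snake hp']

lemma even_snake (hm : Odd m) (ha : a < m) : Even (snake m b a) ↔ (Even a ↔ Even b) := by
  obtain ⟨l, rfl⟩ := hm
  rw [snake]
  split_ifs with hb
  · simp [hb, Nat.even_add, parity_simps]
  · rw [Nat.even_add, Nat.even_mul, Nat.even_sub (by lia), Nat.even_sub (by lia)]
    simp [hb, parity_simps]

/-- In a box of cells `(b, a, p)`, numbering the rows `(b, a)` first or the columns `(a, p)` of a
slice first amounts to the same. -/
lemma snake_snake (hm : Odd m) (ha : a < m) (hp : p < n) :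
    snake n (snake m b a) p = snake (m * n) b (snake n a p) := by
  have hpar := even_snake (b := b) hm ha
  obtain ⟨a', rfl⟩ : ∃ a', m = a + a' + 1 := ⟨m - 1 - a, by lia⟩
  obtain ⟨p', rfl⟩ : ∃ p', n = p + p' + 1 := ⟨n - 1 - p, by lia⟩
  have hcol (x y : ℕ) : x + y + 1 - 1 - x = y := by lia
  have hbox (q q' : ℕ) (hq : q + q' = p + p') : (a + a' + 1) * (p + p' + 1) - 1 -
      ((p + p' + 1) * a + q) = (p + p' + 1) * a' + q' := by
    rw [← hq, show (a + a' + 1) * (q + q' + 1) =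
      (q + q' + 1) * a + q + ((q + q' + 1) * a' + q') + 1 by ring]
    lia
  rw [snake]
  simp only [hpar]
  by_cases hb : Even b <;> by_cases ha : Even a <;>
    simp only [snake, hcol, ha, hb, if_true, if_false, iff_true, iff_false, not_true,
      hbox _ _ rfl, hbox _ _ (add_comm p' p)] <;> ring

lemma letterAbs_div (hm : Odd m) (c : ℕ) : letterAbs (c / m) = (letterAbs c + m / 2) / m := by
  obtain ⟨l, rfl⟩ := hm
  have hl : letterAbs c + (2 * l + 1) / 2 = (c + (2 * l + 1)) / 2 := by
    rw [letterAbs]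
    lia
  rw [hl, Nat.div_div_eq_div_mul, mul_comm 2 (2 * l + 1), ← Nat.div_div_eq_div_mul,
    Nat.add_div_right _ (by lia), letterAbs]

lemma letterAbs_snakeCol (hm : Odd m) (c : ℕ) :
    letterAbs (snakeCol m c) = Nat.dist (letterAbs c) (m * letterAbs (c / m)) := by
  have hcol := snakeCol_lt hm.pos c
  have hsnake := snake_div_snakeCol hm.pos c
  generalize snakeCol m c = a at *
  generalize c / m = b at *
  rw [Nat.dist, ← hsnake, snake]
  split_ifs with hb
  · obtain ⟨k, rfl⟩ := hb
    have hk : letterAbs (k + k) = k := by rw [letterAbs]; lia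
    rw [hk, letterAbs, letterAbs, show m * (k + k) = 2 * (m * k) by ring]
    lia
  · obtain ⟨k, rfl⟩ := Nat.not_even_iff_odd.1 hb
    have hk : letterAbs (2 * k + 1) = k + 1 := by rw [letterAbs]; lia
    rw [hk, letterAbs, letterAbs, show m * (2 * k + 1) = 2 * (m * k) + m by ring, mul_add_one]
    obtain ⟨l, rfl⟩ := hm
    lia

end Snake

section LeftEnriched

variable {n : ℕ} {π τ : Perm (Fin n)} {α β a b c : Fin n → ℕ}

/-- The position of the biletter `(c i, π i)` in the total order that compares the letters of `c`
first and breaks ties by the values of `π`, in increasing order at a nonnegative letter and in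
decreasing order at a negative one. -/
def biletterRank (π : Perm (Fin n)) (c : Fin n → ℕ) (i : Fin n) : ℕ := snake n (c i) (π i)

lemma biletterRank_lt_iff {i j : Fin n} : biletterRank π c i < biletterRank π c j ↔
    c i < c j ∨ c i = c j ∧ if Even (c i) then π i < π j else π j < π i :=
  snake_lt_snake_iff (π i).isLt (π j).isLt

lemma biletterRank_injective (π : Perm (Fin n)) (c : Fin n → ℕ) :
    Function.Injective (biletterRank π c) := fun i j h =>
  π.injective <| Fin.ext <| eq_of_snake_eq (π i).isLt (π j).isLt h

lemma biletterRank_comp (π τ : Perm (Fin n)) (c : Fin n → ℕ) :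
    biletterRank π c ∘ τ = biletterRank (π * τ) (c ∘ τ) := rfl

/-- A left enriched `π`-partition in the sense of Petersen: a weakly increasing word `c` whose ties
`c i = c j`, `i < j`, force `π i < π j` at a nonnegative letter and `π j < π i` at a negative one.
-/
def LeftEnriched (π : Perm (Fin n)) (c : Fin n → ℕ) : Prop := StrictMono (biletterRank π c)

instance : DecidablePred (LeftEnriched π) := fun c =>
  inferInstanceAs (Decidable (∀ i j, i < j → biletterRank π c i < biletterRank π c j))

lemma LeftEnriched.monotone (h : LeftEnriched π c) : Monotone c := fun i j hij => by
  have := Nat.div_le_div_right (c := n) (StrictMono.monotone h hij)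
  rwa [biletterRank, biletterRank, snake_div (π i).isLt, snake_div (π j).isLt] at this

/-- The permutation that sends every position of the word `a` to its place in the order of the
biletters `(a i, π i)`. -/
def standardize (π : Perm (Fin n)) (a : Fin n → ℕ) : Perm (Fin n) :=
  (Tuple.sort (biletterRank π a))⁻¹

lemma standardize_eq_iff : standardize π a = τ ↔ StrictMono (biletterRank π a ∘ ⇑τ⁻¹) := by
  rw [standardize, inv_eq_iff_eq_inv, eq_comm, Tuple.eq_sort_iff]
  have hinj := (biletterRank_injective π a).comp τ⁻¹.injective
  refine ⟨fun h => h.1.strictMono_of_injective hinj, fun h => ⟨h.monotone, fun i j hij he => ?_⟩⟩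
  exact absurd (hinj he) hij.ne

lemma standardize_comp_eq_iff : standardize π (a ∘ τ) = τ ↔ LeftEnriched (π * τ⁻¹) a := by
  rw [standardize_eq_iff, biletterRank_comp, Function.comp_assoc, ← Perm.coe_mul, mul_inv_cancel,
    Perm.coe_one, Function.comp_id, LeftEnriched]

lemma standardize_lt_iff {i j : Fin n} :
    standardize π a i < standardize π a j ↔ biletterRank π a i < biletterRank π a j := by
  have h := (standardize_eq_iff (π := π) (a := a)).1 rfl
  simpa using (h.lt_iff_lt (a := standardize π a i) (b := standardize π a j)).symm

lemma leftEnriched_standardize_iff {m : ℕ} (hm : Odd m) (ha : ∀ i, a i < m) :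
    LeftEnriched (standardize π a) b ↔ LeftEnriched π fun i => snake m (b i) (a i) := by
  have hrank (i : Fin n) : biletterRank π (fun i => snake m (b i) (a i)) i =
      snake (m * n) (b i) (biletterRank π a i) := snake_snake hm (ha i) (π i).isLt
  have hlt (i : Fin n) : biletterRank π a i < m * n := by
    rw [← Nat.div_lt_iff_lt_mul i.pos, biletterRank, snake_div (π i).isLt]
    exact ha i
  refine forall₂_congr fun i j => imp_congr_right fun _ => ?_
  rw [biletterRank_lt_iff, hrank, hrank, snake_lt_snake_iff (hlt i) (hlt j), standardize_lt_iff,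
    standardize_lt_iff]

/-- The words in the alphabet `0 < -1 < 1 < -2 < ⋯` whose letters have the absolute values `β`. -/
def signedWords (β : Fin n → ℕ) : Finset (Fin n → ℕ) :=
  Fintype.piFinset fun i => {2 * β i - 1, 2 * β i}

lemma mem_signedWords : c ∈ signedWords β ↔ letterAbs ∘ c = β := by
  simp only [signedWords, Fintype.mem_piFinset, mem_pair_iff_letterAbs_eq, funext_iff,
    Function.comp_apply]

/-- The left enriched `π`-partitions whose letters have the absolute values `β`. -/
def enrichedWords (π : Perm (Fin n)) (β : Fin n → ℕ) : Finset (Fin n → ℕ) :=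
  {c ∈ signedWords β | LeftEnriched π c}

lemma mem_enrichedWords : c ∈ enrichedWords π β ↔ letterAbs ∘ c = β ∧ LeftEnriched π c := by
  rw [enrichedWords, mem_filter, mem_signedWords]

lemma enrichedWords_eq_empty (hβ : ¬ Monotone β) : enrichedWords π β = ∅ := by
  refine eq_empty_of_forall_notMem fun c hc => hβ ?_
  obtain ⟨rfl, h⟩ := mem_enrichedWords.1 hc
  exact letterAbs_mono.comp h.monotone

/-- The words in the alphabet `0 < -1 < 1 < -2 < ⋯` whose letters have the absolute values `α` in
some order. -/
def signedRearrangements (α : Fin n → ℕ) : Finset (Fin n → ℕ) :=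
  univ.biUnion fun ρ : Perm (Fin n) => signedWords (α ∘ ρ)

lemma mem_signedRearrangements :
    a ∈ signedRearrangements α ↔ ∃ ρ : Perm (Fin n), letterAbs ∘ a = α ∘ ρ := by
  simp only [signedRearrangements, mem_biUnion, mem_univ, true_and, mem_signedWords]

lemma card_standardize_fiber (hα : Monotone α) (π τ : Perm (Fin n)) :
    #{a ∈ signedRearrangements α | standardize π a = τ} = #(enrichedWords (π * τ⁻¹) α) := by
  symm
  refine card_equiv (τ.symm.arrowCongr (Equiv.refl ℕ)) fun c => ?_
  change _ ↔ c ∘ τ ∈ _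
  rw [mem_enrichedWords, mem_filter, mem_signedRearrangements, standardize_comp_eq_iff]
  refine and_congr_left fun hc => ⟨fun h => ⟨τ, congrArg (· ∘ τ) h⟩, fun ⟨ρ, hρ⟩ => ?_⟩
  have habs : letterAbs ∘ c = α ∘ ⇑(ρ * τ⁻¹) := by
    rw [Perm.coe_mul, ← Function.comp_assoc, ← hρ]
    ext; simp
  rw [habs]
  exact Tuple.unique_monotone (τ := 1) (habs ▸ letterAbs_mono.comp hc.monotone) hα

lemma sum_card_enrichedWords_mul (hα : Monotone α) (π : Perm (Fin n)) (f : Perm (Fin n) → ℕ) :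
    ∑ τ, #(enrichedWords (π * τ⁻¹) α) * f τ =
      ∑ a ∈ signedRearrangements α, f (standardize π a) := by
  rw [← sum_fiberwise _ (standardize π)]
  refine sum_congr rfl fun τ _ => ?_
  rw [← card_standardize_fiber hα, sum_congr rfl fun a ha => by rw [(mem_filter.1 ha).2],
    sum_const, smul_eq_mul]

lemma card_filter_leftEnriched {T : Finset (Fin n → ℕ)} (π : Perm (Fin n))
    (hT : ∀ c ∈ T, ∀ c', letterAbs ∘ c' = letterAbs ∘ c → c' ∈ T) :
    #{c ∈ T | LeftEnriched π c} = ∑ γ ∈ T.image (letterAbs ∘ ·), #(enrichedWords π γ) := by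
  rw [card_eq_sum_card_fiberwise fun c hc => mem_image_of_mem (letterAbs ∘ ·) (mem_filter.1 hc).1]
  refine sum_congr rfl fun γ hγ => congrArg card ?_
  obtain ⟨c₀, hc₀, rfl⟩ := mem_image.1 hγ
  ext c
  rw [mem_filter, mem_filter, mem_enrichedWords, and_comm, and_congr_right_iff]
  exact fun h => and_iff_right (hT c₀ hc₀ c h)

/-- The words whose rows form a word with absolute values `β` and whose columns form a signed
rearrangement of `α`, in a grid of `m` columns. -/
def snakeWords (m : ℕ) (α β : Fin n → ℕ) : Finset (Fin n → ℕ) :=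
  (signedRearrangements α ×ˢ signedWords β).image fun p i => snake m (p.2 i) (p.1 i)

variable {m : ℕ}

lemma mem_snakeWords (hm : 0 < m) (hα : ∀ a ∈ signedRearrangements α, ∀ i, a i < m) :
    c ∈ snakeWords m α β ↔
      (fun i => snakeCol m (c i)) ∈ signedRearrangements α ∧ (c · / m) ∈ signedWords β := by
  simp only [snakeWords, mem_image, mem_product, Prod.exists]
  refine ⟨?_, fun h => ⟨_, _, h, funext fun i => snake_div_snakeCol hm (c i)⟩⟩
  rintro ⟨a, b, ⟨ha, hb⟩, rfl⟩
  simpa only [snakeCol_snake (hα a ha _), snake_div (hα a ha _)] using ⟨ha, hb⟩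

lemma mem_snakeWords_of_letterAbs_eq (hm : Odd m)
    (hα : ∀ a ∈ signedRearrangements α, ∀ i, a i < m) (hc : c ∈ snakeWords m α β)
    {c' : Fin n → ℕ} (h : letterAbs ∘ c' = letterAbs ∘ c) : c' ∈ snakeWords m α β := by
  have h' (i : Fin n) : letterAbs (c' i) = letterAbs (c i) := congrFun h i
  simp only [mem_snakeWords hm.pos hα, mem_signedRearrangements, mem_signedWords, funext_iff,
    Function.comp_apply, letterAbs_snakeCol hm, letterAbs_div hm, h'] at hc ⊢
  exact hc

lemma sum_card_enrichedWords_standardize (hm : Odd m)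
    (hα : ∀ a ∈ signedRearrangements α, ∀ i, a i < m) (β : Fin n → ℕ) (π : Perm (Fin n)) :
    ∑ a ∈ signedRearrangements α, #(enrichedWords (standardize π a) β) =
      #{c ∈ snakeWords m α β | LeftEnriched π c} := by
  have hinj : Set.InjOn (fun (p : (Fin n → ℕ) × (Fin n → ℕ)) i => snake m (p.2 i) (p.1 i))
      (signedRearrangements α ×ˢ signedWords β : Finset _) := by
    rintro ⟨a, b⟩ hp ⟨a', b'⟩ hp' h
    have ha := hα a (mem_product.1 hp).1
    have ha' := hα a' (mem_product.1 hp').1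
    refine Prod.ext (funext fun i => ?_) (funext fun i => ?_)
    · exact eq_of_snake_eq (ha i) (ha' i) (congrFun h i)
    · simpa only [snake_div (ha i), snake_div (ha' i)] using congrArg (· / m) (congrFun h i)
  rw [snakeWords, filter_image, card_image_of_injOn (hinj.mono (filter_subset _ _)), card_filter,
    sum_product]
  refine sum_congr rfl fun a ha => ?_
  rw [enrichedWords, card_filter]
  simp only [leftEnriched_standardize_iff hm (hα a ha)]

lemma lt_of_mem_signedRearrangements (ha : a ∈ signedRearrangements α) (i : Fin n) :
    a i < 2 * ∑ j, α j + 1 := by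
  obtain ⟨ρ, hρ⟩ := mem_signedRearrangements.1 ha
  have h : letterAbs (a i) = α (ρ i) := congrFun hρ i
  have := single_le_sum (fun j _ => Nat.zero_le (α j)) (mem_univ (ρ i))
  rw [letterAbs] at h
  lia

theorem exists_sum_card_enrichedWords_mul (hα : Monotone α) (β : Fin n → ℕ) :
    ∃ Γ : Finset (Fin n → ℕ), ∀ π : Perm (Fin n),
      ∑ τ, #(enrichedWords (π * τ⁻¹) α) * #(enrichedWords τ β) =
        ∑ γ ∈ Γ, #(enrichedWords π γ) := by
  have hm : Odd (2 * ∑ j, α j + 1) := odd_two_mul_add_one _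
  have hlt (a) (ha : a ∈ signedRearrangements α) := lt_of_mem_signedRearrangements ha
  refine ⟨(snakeWords (2 * ∑ j, α j + 1) α β).image (letterAbs ∘ ·), fun π => ?_⟩
  rw [sum_card_enrichedWords_mul hα, sum_card_enrichedWords_standardize hm hlt,
    card_filter_leftEnriched _ fun c hc c' => mem_snakeWords_of_letterAbs_eq hm hlt hc]

end LeftEnriched

section Embedding

variable {n : ℕ}

/-- The identification of `Fin n` with `{1, …, n}`, by `i ↦ i + 1`. -/
def finEquivIcc (n : ℕ) : Fin n ≃ {i : ℕ // 1 ≤ i ∧ i ≤ n} where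
  toFun i := ⟨i + 1, by lia⟩
  invFun i := ⟨i.1 - 1, by lia⟩
  left_inv i := by simp
  right_inv i := by ext; simp; lia

lemma exists_fin_of_mem_Icc {i : ℕ} (hi : i ∈ Icc 1 n) : ∃ j : Fin n, i = j + 1 :=
  ⟨(finEquivIcc n).symm ⟨i, mem_Icc.1 hi⟩, by simp [finEquivIcc]; grind⟩

/-- The permutations of `Fin n` as permutations of `{1, …, n}` in the sense of `IsSn`. -/
def embed (n : ℕ) : Perm (Fin n) →* Perm ℕ := Perm.extendDomainHom (finEquivIcc n)

lemma embed_succ (π : Perm (Fin n)) (i : Fin n) : embed n π (i + 1) = π i + 1 :=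
  Perm.extendDomain_apply_image π (finEquivIcc n) i

lemma isSn_embed (π : Perm (Fin n)) : IsSn n (embed n π) := fun _ _ =>
  Perm.extendDomain_apply_not_subtype π (finEquivIcc n) (by lia)

lemma embed_zero (π : Perm (Fin n)) : embed n π 0 = 0 := isSn_embed π 0 (Or.inl rfl)

lemma embed_le (π : Perm (Fin n)) {i : ℕ} (hi : i ≤ n) : embed n π i ≤ n := by
  rcases i with _ | i
  · rw [embed_zero]
    exact hi
  · have := embed_succ π ⟨i, hi⟩
    have := (π ⟨i, hi⟩).isLt
    lia

lemma embed_ne_succ (π : Perm (Fin n)) (i : ℕ) : embed n π i ≠ embed n π (i + 1) :=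
  (embed n π).injective.ne (Nat.lt_succ_self i).ne

lemma embed_injective : Function.Injective (embed n) :=
  Perm.extendDomainHom_injective (finEquivIcc n)

lemma mem_range_embed_iff {π : Perm ℕ} : π ∈ Set.range (embed n) ↔ IsSn n π := by
  refine ⟨by rintro ⟨π, rfl⟩; exact isSn_embed π, fun h => ?_⟩
  have hmem (i : ℕ) : (1 ≤ π i ∧ π i ≤ n) ↔ (1 ≤ i ∧ i ≤ n) := by
    refine not_iff_not.1 ⟨fun hi hi' => ?_, fun hi => by rwa [h i (by lia)]⟩
    rw [π.injective (h (π i) (by lia))] at hi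
    exact hi hi'
  refine ⟨(finEquivIcc n).symm.permCongr (π.subtypePerm hmem), ?_⟩
  ext i
  by_cases hi : 1 ≤ i ∧ i ≤ n
  · obtain ⟨j, rfl⟩ : ∃ j : Fin n, i = j + 1 := exists_fin_of_mem_Icc (mem_Icc.2 hi)
    rw [embed_succ]
    have := (hmem (j + 1)).2 hi
    simp [finEquivIcc, permCongr_apply]
    lia
  · rw [isSn_embed _ i (by lia), h i (by lia)]

/-- The left peak set of a permutation of `Fin n`, positions being counted from `1`. -/
def peaks (π : Perm (Fin n)) : Finset ℕ := leftPeaks n (embed n π)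

lemma mem_peaks {π : Perm (Fin n)} {p : ℕ} : p ∈ peaks π ↔ (1 ≤ p ∧ p < n) ∧
    embed n π (p - 1) < embed n π p ∧ embed n π (p + 1) < embed n π p := by
  rw [peaks, leftPeaks, mem_filter, mem_Icc]
  lia

/-- The word `c` as the function `i ↦ c (i - 1)` on `{1, …, n}`, extended by zero. -/
def padZero (c : Fin n → ℕ) : ℕ → ℕ
  | 0 => 0
  | i + 1 => if h : i < n then c ⟨i, h⟩ else 0

lemma padZero_succ (c : Fin n → ℕ) (i : Fin n) : padZero c (i + 1) = c i := dif_pos i.isLt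

lemma letterAbs_padZero (c : Fin n → ℕ) (i : ℕ) :
    letterAbs (padZero c i) = padZero (letterAbs ∘ c) i := by
  rcases i with _ | i
  · simp only [padZero, letterAbs, Nat.reduceAdd, Nat.reduceDiv]
  · rw [padZero, padZero, apply_dite letterAbs]
    rfl

lemma padZero_le_succ {β : Fin n → ℕ} (hβ : Monotone β) {i : ℕ} (hi : i < n) :
    padZero β i ≤ padZero β (i + 1) := by
  rcases i with _ | i
  · exact Nat.zero_le _
  · rw [padZero, padZero, dif_pos hi, dif_pos (by lia)]
    exact hβ (Nat.le_succ i)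

lemma odd_padZero_mem_Icc {c : Fin n → ℕ} {i : ℕ} (h : Odd (padZero c i)) : i ∈ Icc 1 n := by
  rcases i with _ | i
  · exact absurd h Nat.not_odd_zero
  · rw [padZero] at h
    split_ifs at h with hi
    · exact mem_Icc.2 ⟨Nat.succ_pos i, hi⟩
    · exact absurd h Nat.not_odd_zero

end Embedding

section Counting

variable {n : ℕ} {π : Perm (Fin n)} {β c : Fin n → ℕ}

lemma leftEnriched_iff_forall_lt : LeftEnriched π c ↔ ∀ i < n,
    padZero c i < padZero c (i + 1) ∨ padZero c i = padZero c (i + 1) ∧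
      if Even (padZero c i) then embed n π i < embed n π (i + 1)
      else embed n π (i + 1) < embed n π i := by
  constructor
  · rintro h (_ | i) hi
    · have := embed_succ π ⟨0, hi⟩
      simp only [embed_zero, padZero, Even.zero, if_true]
      lia
    · have := biletterRank_lt_iff.1 (h (a := ⟨i, by lia⟩) (b := ⟨i + 1, hi⟩) (Nat.lt_succ_self i))
      have h₁ := embed_succ π ⟨i, by lia⟩
      have h₂ := embed_succ π ⟨i + 1, hi⟩
      simp only at h₁ h₂
      rw [padZero, padZero, dif_pos hi, dif_pos (by lia), h₁, h₂]
      simpa using this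
  · intro h
    have hmono : StrictMonoOn (fun i => snake (n + 1) (padZero c i) (embed n π i)) (Set.Iic n) :=
      strictMonoOn_of_lt_add_one Set.ordConnected_Iic fun i _ hi hi' =>
        (snake_lt_snake_iff (Nat.lt_succ_of_le (embed_le π hi))
          (Nat.lt_succ_of_le (embed_le π hi'))).2 (h i hi')
    intro i j hij
    have := hmono (Set.mem_Iic.2 i.isLt) (Set.mem_Iic.2 j.isLt) (Nat.succ_lt_succ hij)
    rw [snake_lt_snake_iff (Nat.lt_succ_of_le (embed_le π i.isLt))
      (Nat.lt_succ_of_le (embed_le π j.isLt))] at this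
    simp only [Nat.succ_eq_add_one, padZero_succ, embed_succ] at this
    simpa [biletterRank_lt_iff] using this

lemma lt_or_eq_and_iff_of_letterAbs_eq {x y p q : ℕ} (hxy : letterAbs x = letterAbs y)
    (hpq : p ≠ q) : (x < y ∨ x = y ∧ if Even x then p < q else q < p) ↔
      (p < q → Even y) ∧ (q < p → Odd x) := by
  rw [letterAbs, letterAbs] at hxy
  split_ifs <;> grind

/-- The indices `i < n` with `β_i = β_{i+1}`, where `β_0 = 0`. -/
def stays (β : Fin n → ℕ) : Finset ℕ := {i ∈ range n | padZero β i = padZero β (i + 1)}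

/-- The positions at which a left enriched `π`-partition with absolute values `β` has to be
negative: those followed by a descent of `π` within a block of `β`. -/
def forcedNegative (π : Perm (Fin n)) (β : Fin n → ℕ) : Finset ℕ :=
  {i ∈ stays β | embed n π (i + 1) < embed n π i}

/-- The positions at which a left enriched `π`-partition with absolute values `β` has to be
nonnegative: those preceded by an ascent of `π` within a block of `β`. -/
def forcedNonneg (π : Perm (Fin n)) (β : Fin n → ℕ) : Finset ℕ :=
  {i ∈ stays β | embed n π i < embed n π (i + 1)}.image (· + 1)

/-- The set of positions, counted from `1`, of the negative letters of a word. -/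
def negatives (c : Fin n → ℕ) : Finset ℕ := {i ∈ Icc 1 n | Odd (padZero c i)}

lemma mem_negatives {i : ℕ} : i ∈ negatives c ↔ Odd (padZero c i) := by
  rw [negatives, mem_filter, and_iff_right_of_imp odd_padZero_mem_Icc]

lemma leftEnriched_iff_negatives_mem_Icc (hβ : Monotone β) (hc : letterAbs ∘ c = β) :
    LeftEnriched π c ↔
      negatives c ∈ Finset.Icc (forcedNegative π β) (Icc 1 n \ forcedNonneg π β) := by
  have hsub : negatives c ⊆ Icc 1 n := filter_subset _ _
  have habs (i : ℕ) : letterAbs (padZero c i) = padZero β i := by rw [letterAbs_padZero, hc]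
  have hlocal (i : ℕ) (hi : i < n) : (padZero c i < padZero c (i + 1) ∨
      padZero c i = padZero c (i + 1) ∧ if Even (padZero c i) then
        embed n π i < embed n π (i + 1) else embed n π (i + 1) < embed n π i) ↔
      (padZero β i = padZero β (i + 1) →
        (embed n π i < embed n π (i + 1) → Even (padZero c (i + 1))) ∧
        (embed n π (i + 1) < embed n π i → Odd (padZero c i))) := by
    rcases (padZero_le_succ hβ hi).lt_or_eq with h | h
    · simp only [h.ne, false_implies, iff_true]
      exact Or.inl (letterAbs_mono.reflect_lt (by rwa [habs, habs]))
    · rw [lt_or_eq_and_iff_of_letterAbs_eq (by rw [habs, habs, h]) (embed_ne_succ π i)]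
      simp only [h, true_implies]
  rw [leftEnriched_iff_forall_lt, forall₂_congr hlocal, mem_Icc, subset_sdiff, and_iff_right hsub,
    disjoint_right]
  simp only [subset_iff, forcedNegative, forcedNonneg, stays, forall_mem_image, mem_filter,
    mem_range, mem_negatives, Nat.not_odd_iff_even]
  grind

lemma mem_forcedNegative {i : ℕ} : i ∈ forcedNegative π β ↔
    (i < n ∧ padZero β i = padZero β (i + 1)) ∧ embed n π (i + 1) < embed n π i := by
  rw [forcedNegative, stays, mem_filter, mem_filter, mem_range]

lemma succ_mem_forcedNonneg {i : ℕ} : i + 1 ∈ forcedNonneg π β ↔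
    (i < n ∧ padZero β i = padZero β (i + 1)) ∧ embed n π i < embed n π (i + 1) := by
  simp only [forcedNonneg, stays, mem_image, mem_filter, mem_range, Nat.add_right_cancel_iff,
    exists_eq_right]

lemma forcedNegative_subset (π : Perm (Fin n)) (β : Fin n → ℕ) :
    forcedNegative π β ⊆ Icc 1 n := by
  intro i hi
  obtain ⟨⟨hin, -⟩, hdesc⟩ := mem_forcedNegative.1 hi
  have : i ≠ 0 := by
    rintro rfl
    rw [embed_zero] at hdesc
    exact Nat.not_lt_zero _ hdesc
  exact mem_Icc.2 ⟨Nat.one_le_iff_ne_zero.2 this, hin.le⟩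

lemma forcedNonneg_subset (π : Perm (Fin n)) (β : Fin n → ℕ) :
    forcedNonneg π β ⊆ Icc 1 n := by
  simp only [forcedNonneg, stays, image_subset_iff, mem_filter, mem_range, mem_Icc]
  lia

/-- Zero letters have no negative version, but within the initial block of zeros `π` must increase
from `π 0 = 0` on, so that these letters are forced to be nonnegative anyway. -/
lemma succ_mem_forcedNonneg_of_padZero_eq_zero (hβ : Monotone β)
    (hdisj : Disjoint (forcedNegative π β) (forcedNonneg π β)) {i : ℕ} (hi : i < n)
    (hzero : padZero β (i + 1) = 0) : i + 1 ∈ forcedNonneg π β := by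
  induction i with
  | zero =>
    refine succ_mem_forcedNonneg.2 ⟨⟨hi, hzero.symm⟩, ?_⟩
    rw [embed_zero, ← Fin.val_mk hi, embed_succ]
    exact Nat.succ_pos _
  | succ i ih =>
    have hle := padZero_le_succ hβ hi
    have hstay : i + 1 < n ∧ padZero β (i + 1) = padZero β (i + 1 + 1) := ⟨hi, by lia⟩
    have hdesc := fun h => disjoint_left.1 hdisj (mem_forcedNegative.2 ⟨hstay, h⟩)
      (ih (by lia) (by lia))
    exact succ_mem_forcedNonneg.2 ⟨hstay, (not_lt.1 hdesc).lt_of_ne (embed_ne_succ π _)⟩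

lemma padZero_pos_of_mem {S : Finset ℕ} (hβ : Monotone β)
    (hS : S ∈ Finset.Icc (forcedNegative π β) (Icc 1 n \ forcedNonneg π β)) {i : ℕ}
    (hi : i ∈ S) : 0 < padZero β i := by
  obtain ⟨hneg, hS⟩ := mem_Icc.1 hS
  have hdisj : Disjoint (forcedNegative π β) (forcedNonneg π β) :=
    disjoint_of_subset_left (hneg.trans hS) sdiff_disjoint
  obtain ⟨hin, hnot⟩ := mem_sdiff.1 (hS hi)
  obtain ⟨i, rfl⟩ := Nat.exists_eq_succ_of_ne_zero (Nat.one_le_iff_ne_zero.1 (mem_Icc.1 hin).1)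
  refine Nat.pos_of_ne_zero fun hzero => hnot ?_
  exact succ_mem_forcedNonneg_of_padZero_eq_zero hβ hdisj (mem_Icc.1 hin).2 hzero

lemma card_enrichedWords_eq_card_Icc (hβ : Monotone β) (π : Perm (Fin n)) :
    #(enrichedWords π β) = #(Finset.Icc (forcedNegative π β) (Icc 1 n \ forcedNonneg π β)) := by
  refine card_bij (fun c _ => negatives c) (fun c hc => ?_) (fun c hc c' hc' h => ?_) fun S hS => ?_
  · obtain ⟨habs, h⟩ := mem_enrichedWords.1 hc
    exact (leftEnriched_iff_negatives_mem_Icc hβ habs).1 h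
  · funext i
    have habs := congrFun ((mem_enrichedWords.1 hc).1.trans (mem_enrichedWords.1 hc').1.symm) i
    have hodd := Finset.ext_iff.1 h (i + 1)
    simp only [mem_negatives, padZero_succ, Nat.odd_iff] at hodd
    simp only [Function.comp_apply, letterAbs] at habs
    lia
  · have hpos (i : Fin n) (hi : (i : ℕ) + 1 ∈ S) : 0 < β i := by
      simpa only [padZero_succ] using padZero_pos_of_mem hβ hS hi
    let c (i : Fin n) : ℕ := if (i : ℕ) + 1 ∈ S then 2 * β i - 1 else 2 * β i
    have habs : letterAbs ∘ c = β := by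
      funext i
      simp only [Function.comp_apply, c, letterAbs]
      split_ifs <;> lia
    have hneg : negatives c = S := by
      have hsub : S ⊆ Icc 1 n := (mem_Icc.1 hS).2.trans sdiff_subset
      ext x
      by_cases hx : x ∈ Icc 1 n
      · obtain ⟨i, rfl⟩ := exists_fin_of_mem_Icc hx
        have := hpos i
        rw [mem_negatives, padZero_succ, Nat.odd_iff]
        simp only [c]
        split_ifs <;> lia
      · exact iff_of_false (fun h => hx (filter_subset _ _ h)) fun h => hx (hsub h)
    exact ⟨c, mem_enrichedWords.2
      ⟨habs, (leftEnriched_iff_negatives_mem_Icc hβ habs).2 (hneg ▸ hS)⟩, hneg⟩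

lemma card_forcedNegative_add_card_forcedNonneg (π : Perm (Fin n)) (β : Fin n → ℕ) :
    #(forcedNegative π β) + #(forcedNonneg π β) = #(stays β) := by
  rw [forcedNonneg, card_image_of_injective _ (add_left_injective 1), forcedNegative,
    ← card_filter_add_card_filter_not (s := stays β) fun i => embed n π (i + 1) < embed n π i]
  congr 2
  ext i
  simp only [mem_filter, not_lt, (embed_ne_succ π i).le_iff_lt]

lemma disjoint_forced_iff : Disjoint (forcedNegative π β) (forcedNonneg π β) ↔
    ¬ ∃ p ∈ peaks π, padZero β (p - 1) = padZero β p ∧ padZero β p = padZero β (p + 1) := by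
  rw [disjoint_left, not_exists]
  refine forall_congr' fun p => ?_
  rw [mem_forcedNegative, mem_peaks]
  rcases p with _ | p
  · simp [embed_zero]
  · rw [succ_mem_forcedNonneg, Nat.add_sub_cancel]
    grind

theorem card_enrichedWords (hβ : Monotone β) (π : Perm (Fin n)) :
    #(enrichedWords π β) =
      if ∃ p ∈ peaks π, padZero β (p - 1) = padZero β p ∧ padZero β p = padZero β (p + 1) then 0
      else 2 ^ (n - #(stays β)) := by
  have hsub : forcedNegative π β ⊆ Icc 1 n \ forcedNonneg π β ↔
      Disjoint (forcedNegative π β) (forcedNonneg π β) := by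
    rw [subset_sdiff, and_iff_right (forcedNegative_subset π β)]
  rw [card_enrichedWords_eq_card_Icc hβ]
  split_ifs with h
  · refine card_eq_zero.2 (Finset.Icc_eq_empty fun hle => ?_)
    exact disjoint_forced_iff.1 (hsub.1 hle) h
  · rw [card_Icc_finset (hsub.2 (disjoint_forced_iff.2 h)),
      card_sdiff_of_subset (forcedNonneg_subset π β), Nat.card_Icc, Nat.add_sub_cancel,
      ← card_forcedNegative_add_card_forcedNonneg π β, Nat.sub_sub, add_comm #(forcedNegative π β)]

theorem card_enrichedWords_congr {π' : Perm (Fin n)} (h : peaks π = peaks π') (β : Fin n → ℕ) :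
    #(enrichedWords π β) = #(enrichedWords π' β) := by
  by_cases hβ : Monotone β
  · rw [card_enrichedWords hβ, card_enrichedWords hβ, h]
  · rw [enrichedWords_eq_empty hβ, enrichedWords_eq_empty hβ]

end Counting

section Sparse

variable {m : ℕ} {A I J : Finset ℕ}

/-- The subsets of `{1, …, m}` without two consecutive elements. -/
def sparseSets (m : ℕ) : Finset (Finset ℕ) := {I ∈ (Icc 1 m).powerset | ∀ i ∈ I, i + 1 ∉ I}

lemma mem_sparseSets : I ∈ sparseSets m ↔ I ⊆ Icc 1 m ∧ ∀ i ∈ I, i + 1 ∉ I := by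
  rw [sparseSets, mem_filter, mem_powerset]

lemma notMem_of_mem_sparseSets (hI : I ∈ sparseSets m) {i : ℕ} (hi : m < i) : i ∉ I := fun h =>
  hi.not_ge (mem_Icc.1 ((mem_sparseSets.1 hI).1 h)).2

lemma filter_mem_sparseSets (m : ℕ) :
    {I ∈ sparseSets (m + 2) | m + 2 ∈ I} = (sparseSets m).image (insert (m + 2)) := by
  ext I
  simp only [mem_filter, mem_image, mem_sparseSets]
  constructor
  · rintro ⟨⟨hsub, hI⟩, hmem⟩
    refine ⟨I.erase (m + 2), ⟨fun i hi => ?_, ?_⟩, insert_erase hmem⟩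
    · have := mem_Icc.1 (hsub (mem_of_mem_erase hi))
      have : i ≠ m + 1 := fun h => hI i (mem_of_mem_erase hi) (h ▸ hmem)
      grind
    · exact fun i hi hi' => hI i (mem_of_mem_erase hi) (mem_of_mem_erase hi')
  · rintro ⟨J, ⟨hsub, hJ⟩, rfl⟩
    have hle : ∀ i ∈ J, 1 ≤ i ∧ i ≤ m := fun i hi => mem_Icc.1 (hsub hi)
    grind

lemma filter_notMem_sparseSets (m : ℕ) :
    {I ∈ sparseSets (m + 1) | m + 1 ∉ I} = sparseSets m := by
  ext I
  simp only [mem_filter, mem_sparseSets, ← insert_Icc_right_eq_Icc_add_one (Nat.le_add_left 1 m)]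
  grind

lemma card_sparseSets_add_two (m : ℕ) :
    #(sparseSets (m + 2)) = #(sparseSets m) + #(sparseSets (m + 1)) := by
  have hinj : Set.InjOn (insert (m + 2)) (sparseSets m : Set (Finset ℕ)) := by
    intro I hI J hJ h
    rw [← erase_insert (notMem_of_mem_sparseSets hI (i := m + 2) (by lia)), h,
      erase_insert (notMem_of_mem_sparseSets hJ (by lia))]
  rw [← card_filter_add_card_filter_not (m + 2 ∈ ·), filter_mem_sparseSets,
    filter_notMem_sparseSets, card_image_of_injOn hinj]

lemma card_sparseSets (m : ℕ) : #(sparseSets m) = Nat.fib (m + 2) := by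
  induction m using Nat.twoStepInduction with
  | zero => decide
  | one => decide
  | more m ih ih' => rw [card_sparseSets_add_two, ih, ih', ← Nat.fib_add_two]

lemma card_sparseSets_pred (n : ℕ) : #(sparseSets (n - 1)) = Nat.fib (n + 1) := by
  rcases n with _ | n
  · decide
  · exact card_sparseSets n

variable {n : ℕ}

lemma peaks_mem_sparseSets (π : Perm (Fin n)) : peaks π ∈ sparseSets (n - 1) := by
  refine mem_sparseSets.2 ⟨filter_subset _ _, fun i hi hi' => ?_⟩
  exact lt_asymm (mem_peaks.1 hi).2.2 (mem_peaks.1 hi').2.1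

/-- The function exchanging `i` and `i + 1` for every `i` in the sparse set `I`. -/
def swapSucc (I : Finset ℕ) (i : ℕ) : ℕ :=
  if i ∈ I then i + 1 else if 1 ≤ i ∧ i - 1 ∈ I then i - 1 else i

lemma swapSucc_involutive (hI : ∀ i ∈ I, i + 1 ∉ I) : Function.Involutive (swapSucc I) := by
  intro i
  simp only [swapSucc]
  grind

lemma exists_peaks_eq (hI : I ∈ sparseSets (n - 1)) : ∃ π : Perm (Fin n), peaks π = I := by
  obtain ⟨hsub, hsparse⟩ := mem_sparseSets.1 hI
  have hle : ∀ i ∈ I, 1 ≤ i ∧ i ≤ n - 1 := fun i hi => mem_Icc.1 (hsub hi)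
  have hfix : IsSn n (swapSucc_involutive hsparse).toPerm := by
    intro i hi
    rw [Function.Involutive.coe_toPerm, swapSucc]
    grind
  obtain ⟨π, hπ⟩ := mem_range_embed_iff.2 hfix
  refine ⟨π, ext fun i => ?_⟩
  rw [mem_peaks, hπ, Function.Involutive.coe_toPerm]
  simp only [swapSucc]
  grind

/-- The weakly increasing word that increases by one precisely at the positions in `A`, for
`A ⊆ {1, …, n}`. -/
def stepWord (n : ℕ) (A : Finset ℕ) (i : Fin n) : ℕ := Nat.count (· ∈ A) (i + 2)

lemma stepWord_monotone (n : ℕ) (A : Finset ℕ) : Monotone (stepWord n A) := fun _ _ h =>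
  Nat.count_monotone _ (Nat.add_le_add_right h 2)

lemma padZero_stepWord (hA : 0 ∉ A) {i : ℕ} (hi : i ≤ n) :
    padZero (stepWord n A) i = Nat.count (· ∈ A) (i + 1) := by
  rcases i with _ | i
  · simp [padZero, Nat.count_succ, hA]
  · rw [padZero, dif_pos (Nat.lt_of_succ_le hi), stepWord]

lemma padZero_stepWord_eq_succ_iff (hA : 0 ∉ A) {i : ℕ} (hi : i < n) :
    padZero (stepWord n A) i = padZero (stepWord n A) (i + 1) ↔ i + 1 ∉ A := by
  rw [padZero_stepWord hA hi.le, padZero_stepWord hA hi, Nat.count_succ _ (i + 1)]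
  simp

lemma toColex_le_of_forall_mem_or_succ_mem (hJ : ∀ i ∈ J, i + 1 ∉ J)
    (h : ∀ p ∈ J, p ∈ A ∨ p + 1 ∈ A) : toColex J ≤ toColex A :=
  Colex.toColex_le_toColex.2 fun p hp hpA =>
    ⟨p + 1, (h p hp).resolve_left hpA, hJ p hp, Nat.le_succ p⟩

lemma card_enrichedWords_stepWord (hA : 0 ∉ A) (π : Perm (Fin n)) :
    #(enrichedWords π (stepWord n A)) =
      if ∀ p ∈ peaks π, p ∈ A ∨ p + 1 ∈ A then 2 ^ (n - #(stays (stepWord n A))) else 0 := by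
  have hiff : (∃ p ∈ peaks π, padZero (stepWord n A) (p - 1) = padZero (stepWord n A) p ∧
      padZero (stepWord n A) p = padZero (stepWord n A) (p + 1)) ↔
      ¬ ∀ p ∈ peaks π, p ∈ A ∨ p + 1 ∈ A := by
    push Not
    refine exists_congr fun p => and_congr_right fun hp => ?_
    obtain ⟨⟨hp1, hpn⟩, -⟩ := mem_peaks.1 hp
    obtain ⟨p, rfl⟩ := Nat.exists_eq_succ_of_ne_zero (Nat.one_le_iff_ne_zero.1 hp1)
    exact and_congr (padZero_stepWord_eq_succ_iff hA (by lia)) (padZero_stepWord_eq_succ_iff hA hpn)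
  rw [card_enrichedWords (stepWord_monotone n A), ← ite_not]
  simp only [hiff, not_not]

end Sparse

section GroupAlgebra

variable {n : ℕ} {R : Type*} [CommSemiring R] {A : Finset ℕ} {π π' : Perm (Fin n)}

lemma coeff_mul_eq_sum {G : Type*} [Group G] [Fintype G] (x y : MonoidAlgebra R G) (g : G) :
    (x * y).coeff g = ∑ h, x.coeff (g * h⁻¹) * y.coeff h := by
  rw [MonoidAlgebra.coeff_mul_apply_right, Finsupp.sum_fintype _ _ fun _ => mul_zero _]

/-- The elements of the group algebra of `Perm (Fin n)` whose coefficient at `π` depends only on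
the left peak set of `π`. -/
def peakSubmodule (R : Type*) [CommSemiring R] (n : ℕ) :
    Submodule R (MonoidAlgebra R (Perm (Fin n))) where
  carrier := {x | ∀ π π', peaks π = peaks π' → x.coeff π = x.coeff π'}
  add_mem' hx hy π π' h := congrArg₂ (· + ·) (hx π π' h) (hy π π' h)
  zero_mem' _ _ _ := rfl
  smul_mem' r _ hx π π' h := congrArg (r * ·) (hx π π' h)

/-- The sum of all permutations of `Fin n` with left peak set `I`, the counterpart of `wI n I` over
`R`. -/
noncomputable def peakClassSum (R : Type*) [CommSemiring R] (n : ℕ) (I : Finset ℕ) :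
    MonoidAlgebra R (Perm (Fin n)) :=
  ∑ π with peaks π = I, MonoidAlgebra.single π 1

lemma coeff_peakClassSum (I : Finset ℕ) (π : Perm (Fin n)) :
    (peakClassSum R n I).coeff π = if peaks π = I then 1 else 0 := by
  classical
  simp [peakClassSum, MonoidAlgebra.coeff_sum, Finsupp.single_apply, sum_ite_eq']

lemma coeff_sum_smul_peakClassSum {S : Finset (Finset ℕ)} (z : Finset ℕ → R)
    (π : Perm (Fin n)) :
    (∑ I ∈ S, z I • peakClassSum R n I).coeff π = if peaks π ∈ S then z (peaks π) else 0 := by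
  simp [MonoidAlgebra.coeff_sum, coeff_peakClassSum]

lemma peakClassSum_mem_peakSubmodule (I : Finset ℕ) : peakClassSum R n I ∈ peakSubmodule R n :=
  fun π π' h => by rw [coeff_peakClassSum, coeff_peakClassSum, h]

lemma span_peakClassSum :
    Submodule.span R (peakClassSum R n '' sparseSets (n - 1)) = peakSubmodule R n := by
  refine le_antisymm (Submodule.span_le.2 ?_) fun x hx => ?_
  · rintro _ ⟨I, -, rfl⟩
    exact peakClassSum_mem_peakSubmodule I
  · obtain ⟨z, hz⟩ : ∃ z : Finset ℕ → R, ∀ π, x.coeff π = z (peaks π) :=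
      ⟨_, fun π => ((Function.FactorsThrough.extend_apply (g := x.coeff) (hx · · ·) 0 π).symm)⟩
    have hsum : x = ∑ I ∈ sparseSets (n - 1), z I • peakClassSum R n I := by
      refine MonoidAlgebra.ext (Finsupp.ext fun π => ?_)
      rw [coeff_sum_smul_peakClassSum, if_pos (peaks_mem_sparseSets π), hz]
    rw [hsum]
    exact Submodule.sum_mem _ fun I hI =>
      Submodule.smul_mem _ _ (Submodule.subset_span ⟨I, hI, rfl⟩)

lemma linearIndependent_peakClassSum :
    LinearIndepOn R (peakClassSum R n) (sparseSets (n - 1) : Set (Finset ℕ)) := by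
  rw [linearIndepOn_finset_iffₛ]
  intro z z' hz I hI
  obtain ⟨π, rfl⟩ := exists_peaks_eq hI
  simpa only [coeff_sum_smul_peakClassSum, if_pos hI] using
    congrArg (MonoidAlgebra.coeff · π) hz

lemma finrank_peakSubmodule [StrongRankCondition R] :
    Module.finrank R (peakSubmodule R n) = Nat.fib (n + 1) := by
  have := nontrivial_of_invariantBasisNumber R
  rw [← span_peakClassSum, Set.image_eq_range,
    finrank_span_eq_card (linearIndependent_peakClassSum (R := R) (n := n))]
  simp [card_sparseSets_pred]

lemma coeff_peakClassSum_mul_peakClassSum (A B : Finset ℕ) (π : Perm (Fin n)) :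
    (peakClassSum R n B * peakClassSum R n A).coeff π =
      (#{τ : Perm (Fin n) | peaks τ = A ∧ peaks (π * τ⁻¹) = B} : R) := by
  simp [coeff_mul_eq_sum, coeff_peakClassSum, ite_and, card_filter]

/-- The generating function `∑ π, #(enrichedWords π β) • π` of the left enriched words with
absolute values `β`, rationally since the triangularity argument divides by powers of two. -/
noncomputable def enrichedSum (β : Fin n → ℕ) : MonoidAlgebra ℚ (Perm (Fin n)) :=
  ∑ π, MonoidAlgebra.single π (#(enrichedWords π β) : ℚ)

lemma coeff_enrichedSum (β : Fin n → ℕ) (π : Perm (Fin n)) :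
    (enrichedSum β).coeff π = #(enrichedWords π β) := by
  classical
  simp [enrichedSum, MonoidAlgebra.coeff_sum, Finsupp.single_apply]

lemma enrichedSum_mem_peakSubmodule (β : Fin n → ℕ) : enrichedSum β ∈ peakSubmodule ℚ n :=
  fun π π' h => by rw [coeff_enrichedSum, coeff_enrichedSum, card_enrichedWords_congr h]

lemma enrichedSum_mul_mem_peakSubmodule {α : Fin n → ℕ} (hα : Monotone α) (β : Fin n → ℕ) :
    enrichedSum α * enrichedSum β ∈ peakSubmodule ℚ n := by
  obtain ⟨Γ, hΓ⟩ := exists_sum_card_enrichedWords_mul hα β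
  have hprod : enrichedSum α * enrichedSum β = ∑ γ ∈ Γ, enrichedSum γ := by
    refine MonoidAlgebra.ext (Finsupp.ext fun π => ?_)
    simp only [coeff_mul_eq_sum, MonoidAlgebra.coeff_sum, Finsupp.finsetSum_apply,
      coeff_enrichedSum]
    exact_mod_cast hΓ π
  rw [hprod]
  exact Submodule.sum_mem _ fun γ _ => enrichedSum_mem_peakSubmodule γ

lemma enrichedSum_stepWord (hA : 0 ∉ A) : enrichedSum (stepWord n A) =
    (2 : ℚ) ^ (n - #(stays (stepWord n A))) •
      ∑ J ∈ sparseSets (n - 1) with ∀ p ∈ J, p ∈ A ∨ p + 1 ∈ A, peakClassSum ℚ n J := by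
  refine MonoidAlgebra.ext (Finsupp.ext fun π => ?_)
  simp [MonoidAlgebra.coeff_sum, coeff_peakClassSum, coeff_enrichedSum,
    card_enrichedWords_stepWord hA, peaks_mem_sparseSets]

lemma wellFounded_toColex_lt : WellFounded fun I J : Finset ℕ => toColex I < toColex J :=
  InvImage.wf toColex (geomSum_ofColex_strictMono le_rfl).wellFoundedLT.wf

lemma peakClassSum_mem_span_enrichedSum (hA : A ∈ sparseSets (n - 1)) :
    peakClassSum ℚ n A ∈ Submodule.span ℚ (enrichedSum '' {β : Fin n → ℕ | Monotone β}) := by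
  induction A using wellFounded_toColex_lt.induction with | _ A ih
  have hA₀ : 0 ∉ A := fun h => by simpa using (mem_sparseSets.1 hA).1 h
  set T := {J ∈ sparseSets (n - 1) | ∀ p ∈ J, p ∈ A ∨ p + 1 ∈ A} with hT
  have hAT : A ∈ T := mem_filter.2 ⟨hA, fun _ => Or.inl⟩
  set W := Submodule.span ℚ (enrichedSum '' {β : Fin n → ℕ | Monotone β})
  have htop : ∑ J ∈ T, peakClassSum ℚ n J ∈ W := by
    have hmem : enrichedSum (stepWord n A) ∈ W :=
      Submodule.subset_span ⟨_, stepWord_monotone n A, rfl⟩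
    rwa [enrichedSum_stepWord hA₀, Submodule.smul_mem_iff _ (by positivity)] at hmem
  rw [← add_sum_erase _ _ hAT] at htop
  refine (Submodule.add_mem_iff_left _ (Submodule.sum_mem _ fun J hJ => ?_)).1 htop
  obtain ⟨hJA, hJ, hmeet⟩ : J ≠ A ∧ J ∈ sparseSets (n - 1) ∧ _ := by
    simpa only [mem_erase, hT, mem_filter] using hJ
  refine ih J (lt_of_le_of_ne ?_ (toColex.injective.ne hJA)) hJ
  exact toColex_le_of_forall_mem_or_succ_mem (mem_sparseSets.1 hJ).2 hmeet

lemma mul_mem_peakSubmodule_rat {x y : MonoidAlgebra ℚ (Perm (Fin n))}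
    (hx : x ∈ peakSubmodule ℚ n) (hy : y ∈ peakSubmodule ℚ n) : x * y ∈ peakSubmodule ℚ n := by
  have hspan : peakSubmodule ℚ n ≤
      Submodule.span ℚ (enrichedSum '' {β : Fin n → ℕ | Monotone β}) := by
    rw [← span_peakClassSum, Submodule.span_le]
    rintro _ ⟨A, hA, rfl⟩
    exact peakClassSum_mem_span_enrichedSum hA
  refine LinearMap.BilinMap.apply_apply_mem_of_mem_span _ _ _ (LinearMap.mul ℚ _) ?_ _ _
    (hspan hx) (hspan hy)
  rintro _ ⟨α, hα, rfl⟩ _ ⟨β, -, rfl⟩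
  exact enrichedSum_mul_mem_peakSubmodule hα β

theorem card_filter_peaks_congr (h : peaks π = peaks π') (A B : Finset ℕ) :
    #{τ : Perm (Fin n) | peaks τ = A ∧ peaks (π * τ⁻¹) = B} =
      #{τ : Perm (Fin n) | peaks τ = A ∧ peaks (π' * τ⁻¹) = B} := by
  have := mul_mem_peakSubmodule_rat (peakClassSum_mem_peakSubmodule B)
    (peakClassSum_mem_peakSubmodule A) π π' h
  rw [coeff_peakClassSum_mul_peakClassSum, coeff_peakClassSum_mul_peakClassSum] at this
  exact_mod_cast this

theorem mul_mem_peakSubmodule {x y : MonoidAlgebra R (Perm (Fin n))} (hx : x ∈ peakSubmodule R n)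
    (hy : y ∈ peakSubmodule R n) : x * y ∈ peakSubmodule R n := by
  rw [← span_peakClassSum] at hx hy
  refine LinearMap.BilinMap.apply_apply_mem_of_mem_span _ _ _ (LinearMap.mul R _) ?_ _ _ hx hy
  rintro _ ⟨B, -, rfl⟩ _ ⟨A, -, rfl⟩ π π' h
  rw [LinearMap.mul_apply', coeff_peakClassSum_mul_peakClassSum,
    coeff_peakClassSum_mul_peakClassSum, card_filter_peaks_congr h]

end GroupAlgebra

section Transfer

variable {n : ℕ}

lemma natCard_factorizations (π : Perm (Fin n)) (A B : Finset ℕ) :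
    Nat.card {p : Perm ℕ × Perm ℕ // IsSn n p.1 ∧ IsSn n p.2 ∧ p.1 * p.2 = embed n π ∧
      leftPeaks n p.2 = A ∧ leftPeaks n p.1 = B} =
    #{τ : Perm (Fin n) | peaks τ = A ∧ peaks (π * τ⁻¹) = B} := by
  have hinj : Function.Injective fun τ => (embed n (π * τ⁻¹), embed n τ) := fun τ τ' h =>
    embed_injective (Prod.ext_iff.1 h).2
  classical
  rw [← card_image_of_injective _ hinj]
  refine Nat.subtype_card _ fun ⟨σ, τ⟩ => ?_
  simp only [mem_image, mem_filter, mem_univ, true_and, Prod.mk.injEq, ← mem_range_embed_iff]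
  constructor
  · rintro ⟨τ, ⟨hA, hB⟩, rfl, rfl⟩
    exact ⟨⟨_, rfl⟩, ⟨_, rfl⟩, by rw [← map_mul, inv_mul_cancel_right], hA, hB⟩
  · rintro ⟨⟨σ, rfl⟩, ⟨τ, rfl⟩, hπ, hA, hB⟩
    obtain rfl : σ = π * τ⁻¹ := eq_mul_inv_of_mul_eq (embed_injective (by rw [map_mul, hπ]))
    exact ⟨τ, ⟨hA, hB⟩, rfl, rfl⟩

/-- The inclusion of group algebras induced by `embed n`. -/
noncomputable def embedAlgHom (n : ℕ) :
    MonoidAlgebra ℤ (Perm (Fin n)) →ₐ[ℤ] MonoidAlgebra ℤ (Perm ℕ) :=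
  MonoidAlgebra.mapDomainAlgHom ℤ ℤ (embed n)

lemma embedAlgHom_injective : Function.Injective (embedAlgHom n) :=
  MonoidAlgebra.mapDomain_injective embed_injective

lemma wI_eq_embedAlgHom (I : Finset ℕ) : wI n I = embedAlgHom n (peakClassSum ℤ n I) := by
  have hset : {π : Perm ℕ | IsSn n π ∧ leftPeaks n π = I} =
      embed n '' ({π : Perm (Fin n) | peaks π = I} : Finset (Perm (Fin n))) := by
    ext π
    simp only [← mem_range_embed_iff, coe_filter, mem_univ, true_and, Set.mem_image]
    constructor
    · rintro ⟨⟨π, rfl⟩, hI⟩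
      exact ⟨π, hI, rfl⟩
    · rintro ⟨π, hI, rfl⟩
      exact ⟨⟨π, rfl⟩, hI⟩
  rw [wI, hset, finsum_mem_image embed_injective.injOn, finsum_mem_coe_finset, peakClassSum,
    map_sum]
  simp [embedAlgHom]

lemma leftPeakSpan_eq_map :
    leftPeakSpan n = (peakSubmodule ℤ n).map (embedAlgHom n).toLinearMap := by
  rw [← span_peakClassSum, Submodule.map_span, leftPeakSpan, Set.image_image]
  congr 1
  ext v
  simp only [Set.mem_image, mem_coe, mem_sparseSets, AlgHom.toLinearMap_apply, ← wI_eq_embedAlgHom]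
  simp only [Set.mem_ofPred_eq, and_assoc, eq_comm]

end Transfer

end LeftPeak

/-- The left peak algebra: the number of factorizations `σ·τ = π` with prescribed left peak
sets `lPe(τ) = A`, `lPe(σ) = B` depends only on `lPe(π)`; consequently the span of the
`w_I` is a subalgebra of `ℤ[S_n]`, of dimension the Fibonacci number `f_n = Nat.fib (n+1)`. -/
theorem left_peak_algebra (n : ℕ) :
    (∀ π π' : Equiv.Perm ℕ, IsSn n π → IsSn n π' → leftPeaks n π = leftPeaks n π' →
      ∀ A B : Finset ℕ,
        Nat.card {p : Equiv.Perm ℕ × Equiv.Perm ℕ //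
          IsSn n p.1 ∧ IsSn n p.2 ∧ p.1 * p.2 = π ∧
            leftPeaks n p.2 = A ∧ leftPeaks n p.1 = B}
        = Nat.card {p : Equiv.Perm ℕ × Equiv.Perm ℕ //
          IsSn n p.1 ∧ IsSn n p.2 ∧ p.1 * p.2 = π' ∧
            leftPeaks n p.2 = A ∧ leftPeaks n p.1 = B}) ∧
    (∀ x ∈ leftPeakSpan n, ∀ y ∈ leftPeakSpan n, x * y ∈ leftPeakSpan n) ∧
    Module.finrank ℤ (leftPeakSpan n) = Nat.fib (n + 1) := by
  open LeftPeak in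
  refine ⟨fun π π' hπ hπ' h A B => ?_, ?_, ?_⟩
  · obtain ⟨π, rfl⟩ := mem_range_embed_iff.2 hπ
    obtain ⟨π', rfl⟩ := mem_range_embed_iff.2 hπ'
    rw [natCard_factorizations, natCard_factorizations]
    exact card_filter_peaks_congr h A B
  · rw [leftPeakSpan_eq_map]
    rintro _ ⟨x, hx, rfl⟩ _ ⟨y, hy, rfl⟩
    exact ⟨x * y, mul_mem_peakSubmodule hx hy, map_mul (embedAlgHom n) x y⟩
  · rw [leftPeakSpan_eq_map, ← finrank_peakSubmodule (R := ℤ)]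
    exact (Submodule.equivMapOfInjective _ embedAlgHom_injective _).finrank_eq.symm
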